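/- Let γ>0 and β>0 satisfy 2β<γ. Then there exists a constant C>0 such that for all δ∈(0,1]: Σ_{k∈ℤ²₀} |k|^{4β−2}(1+δ|k|^{2γ})^{−1} ≤ C δ^{−2β/γ}. In particular, with β_η:=ηγ/2 for η∈(0,1/γ)∩(0,∞), the quantity Λ_{β_η}(δ):=Σ_{k∈ℤ²₀}|k|^{−2(1−2β_η)}(1+δ|k|^{2γ})^{−1} satisfies Λ_{β_η}(δ) ≤ C δ^{−η}. -/

import Mathlib

open MeasureTheory Filter Topology Set

noncomputable section

/-- The nonzero lattice points `ℤ²₀ = ℤ² \ {0}`. -/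
abbrev Z2 : Type := {k : ℤ × ℤ // k ≠ 0}

/-- `|k| = √(k₁² + k₂²)`. -/
def knorm (k : Z2) : ℝ := Real.sqrt ((k.val.1 : ℝ) ^ 2 + (k.val.2 : ℝ) ^ 2)

/-- Membership in `H^s`: summability of `|k|^{2s} |a_k|²`. -/
def MemHs (s : ℝ) (a : Z2 → ℂ) : Prop :=
  Summable fun k : Z2 => knorm k ^ (2 * s) * ‖a k‖ ^ 2

/-- The `H^s` norm `(Σ_k |k|^{2s}|a_k|²)^{1/2}`. -/
def hsNorm (s : ℝ) (a : Z2 → ℂ) : ℝ :=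
  Real.sqrt (∑' k : Z2, knorm k ^ (2 * s) * ‖a k‖ ^ 2)

/-- Membership in `L²(0,T;H)`. -/
def MemL2H (T : ℝ) (φ : ℝ → Z2 → ℂ) : Prop :=
  (∀ k : Z2, Measurable fun t => φ t k) ∧
  (∀ t ∈ Icc (0 : ℝ) T, Summable fun k : Z2 => ‖φ t k‖ ^ 2) ∧
  IntegrableOn (fun t => ∑' k : Z2, ‖φ t k‖ ^ 2) (Ioc 0 T)

/-- The `L²(0,T;H)` norm. -/
def L2Hnorm (T : ℝ) (φ : ℝ → Z2 → ℂ) : ℝ :=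
  Real.sqrt (∫ t in Ioc (0 : ℝ) T, ∑' k : Z2, ‖φ t k‖ ^ 2)

/-- `(Γ(φ)(t))_k = ∫₀ᵗ e^{-(t-s)|k|²} φ_k(s) ds`. -/
def Gam (φ : ℝ → Z2 → ℂ) (t : ℝ) (k : Z2) : ℂ :=
  ∫ s in Ioc (0 : ℝ) t, Real.exp (-(t - s) * knorm k ^ 2) • φ s k

/-- The `L²(0,T;H)` inner product `∫₀ᵀ ⟨ψ(t), φ(t)⟩_H dt`. -/
def innerL2 (T : ℝ) (ψ φ : ℝ → Z2 → ℂ) : ℂ :=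
  ∫ t in Ioc (0 : ℝ) T, ∑' k : Z2, (starRingEnd ℂ) (ψ t k) * φ t k

/-- The eigenvalues `λ_k(δ) = (1 + δ|k|^{2γ})^{-1/2}` of `Q_δ`. -/
def lam (γ δ : ℝ) (k : Z2) : ℝ := (1 + δ * knorm k ^ (2 * γ)) ^ (-(1 / 2) : ℝ)

/-- The diagonal operator `Q_δ`. -/
def Qop (γ δ : ℝ) (a : Z2 → ℂ) (k : Z2) : ℂ := lam γ δ k • a k

end

theorem aux_low (a : ℝ) (ha : 0 < a) (n : ℕ) :
    ((n + 1 : ℕ) : ℝ) ^ (a - 1) ≤ (1 + 1 / a) * (((n + 1 : ℕ) : ℝ) ^ a - (n : ℝ) ^ a) := by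
  set x : ℝ := ((n + 1 : ℕ) : ℝ) with hx
  have hn : (n : ℝ) = x - 1 := by rw [hx]; push_cast; ring
  have hn0 : (0 : ℝ) ≤ n := Nat.cast_nonneg n
  have hx0 : 0 < x := by linarith
  have hxa : x ^ a = x ^ (a - 1) * x := by
    rw [← Real.rpow_add_one hx0.ne']; ring_nf
  have hp : 0 < x ^ (a - 1) := Real.rpow_pos_of_pos hx0 _
  rcases le_total 1 a with h1 | h1
  · have h : (n : ℝ) ^ a ≤ x ^ (a - 1) * n := by
      rcases hn0.eq_or_lt with h0 | h0
      · rw [← h0, Real.zero_rpow ha.ne']; simp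
      · have : (n : ℝ) ^ a = (n : ℝ) ^ (a - 1) * n := by
          rw [← Real.rpow_add_one h0.ne']; ring_nf
        rw [this]
        gcongr
        linarith
    have h3 : x ^ (a - 1) ≤ x ^ a - (n : ℝ) ^ a := by
      rw [hxa]; rw [hn] at h ⊢; nlinarith
    have h4 : 0 < 1 / a := by positivity
    nlinarith
  · have h : (n : ℝ) ^ a ≤ x ^ a * (1 - a / x) := by
      have e : (n : ℝ) = x * (1 + (-(1 / x))) := by rw [hn]; field_simp; ring
      have h1x : 1 / x ≤ 1 := by rw [div_le_one hx0]; linarith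
      rw [e, Real.mul_rpow hx0.le (by linarith)]
      have := rpow_one_add_le_one_add_mul_self (s := -(1 / x)) (by linarith) ha.le h1
      have e2 : 1 + a * (-(1 / x)) = 1 - a / x := by ring
      rw [e2] at this
      gcongr
    have h3 : a * x ^ (a - 1) ≤ x ^ a - (n : ℝ) ^ a := by
      have : x ^ a * (1 - a / x) = x ^ a - a * x ^ (a - 1) := by
        rw [hxa]; field_simp
      linarith
    have h5 : x ^ (a - 1) ≤ (x ^ a - (n : ℝ) ^ a) / a := by
      rw [le_div_iff₀ ha]; linarith
    have h6 : 0 ≤ x ^ a - (n : ℝ) ^ a := le_trans (by positivity) h3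
    calc _ ≤ _ := h5
      _ ≤ _ := by
        rw [div_eq_mul_one_div]; nlinarith

theorem aux_high (c : ℝ) (hc : 0 < c) (n : ℕ) (hn : 1 ≤ n) :
    c * ((n + 1 : ℕ) : ℝ) ^ (-c - 1) ≤ (n : ℝ) ^ (-c) - ((n + 1 : ℕ) : ℝ) ^ (-c) := by
  set x : ℝ := ((n + 1 : ℕ) : ℝ) with hx
  have hnx : (n : ℝ) = x - 1 := by rw [hx]; push_cast; ring
  have hn0 : (1 : ℝ) ≤ n := by exact_mod_cast hn
  have hx0 : 0 < x := by linarith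
  have h1x : 1 / x < 1 := by rw [div_lt_one hx0]; linarith
  have e : (n : ℝ) = x * (1 - 1 / x) := by rw [hnx]; field_simp
  have hy : 0 < 1 - 1 / x := by linarith
  have key : 1 + c / x ≤ (1 - 1 / x) ^ (-c) ∨ c ≤ 0 := by
    rcases le_total c 0 with h | h
    · exact Or.inr h
    left
    rw [Real.rpow_def_of_pos hy]
    have h1 : Real.log (1 - 1 / x) ≤ -(1 / x) := by
      have := Real.log_le_sub_one_of_pos hy; linarith
    have h2 := Real.add_one_le_exp (Real.log (1 - 1 / x) * -c)
    have h3 : c / x = c * (1 / x) := by ring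
    nlinarith
  have hxc : x ^ (-c) = x ^ (-c - 1) * x := by
    rw [← Real.rpow_add_one hx0.ne']; ring_nf
  have hp : 0 < x ^ (-c - 1) := Real.rpow_pos_of_pos hx0 _
  have key := key.resolve_right (not_le.mpr hc)
  rw [e, Real.mul_rpow hx0.le hy.le]
  have h4 := mul_le_mul_of_nonneg_left key (Real.rpow_nonneg hx0.le (-c))
  have h5 : x ^ (-c) * (1 + c / x) = x ^ (-c) + c * x ^ (-c - 1) := by
    rw [hxc]; field_simp
  linarith

/-- One-dimensional sum bound. -/
theorem aux_sum (a b : ℝ) (ha : 0 < a) (hab : a < b) (δ : ℝ) (hδ : 0 < δ) (hδ1 : δ ≤ 1) (N : ℕ) :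
    ∑ n ∈ Finset.range N, ((n + 1 : ℕ) : ℝ) ^ (a - 1) * (1 + δ * ((n + 1 : ℕ) : ℝ) ^ b)⁻¹
      ≤ ((1 + 1 / a) + 2 ^ (b - a) / (b - a)) * δ ^ (-a / b) := by
  have hb : 0 < b := ha.trans hab
  set g : ℕ → ℝ := fun n => ((n + 1 : ℕ) : ℝ) ^ (a - 1) * (1 + δ * ((n + 1 : ℕ) : ℝ) ^ b)⁻¹ with hg
  change ∑ n ∈ Finset.range N, g n ≤ _
  have hc : 0 < b - a := by linarith
  have hg1 : ∀ n, g n ≤ ((n + 1 : ℕ) : ℝ) ^ (a - 1) := by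
    intro n
    apply mul_le_of_le_one_right (by positivity)
    apply inv_le_one_of_one_le₀
    have : 0 ≤ δ * ((n + 1 : ℕ) : ℝ) ^ b := by positivity
    linarith
  have hg0 : ∀ n, 0 ≤ g n := fun n => by positivity
  have hg2 : ∀ n, g n ≤ δ⁻¹ * ((n + 1 : ℕ) : ℝ) ^ (-(b - a) - 1) := by
    intro n
    have hx : (0 : ℝ) < ((n + 1 : ℕ) : ℝ) := by positivity
    have e : ((n + 1 : ℕ) : ℝ) ^ (-(b - a) - 1) = ((n + 1 : ℕ) : ℝ) ^ (a - 1) * (((n + 1 : ℕ) : ℝ) ^ b)⁻¹ := by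
      rw [← Real.rpow_neg hx.le, ← Real.rpow_add hx]; ring_nf
    rw [e]
    have : (1 + δ * ((n + 1 : ℕ) : ℝ) ^ b)⁻¹ ≤ (δ * ((n + 1 : ℕ) : ℝ) ^ b)⁻¹ := by
      apply inv_anti₀ (by positivity); linarith
    calc g n ≤ ((n + 1 : ℕ) : ℝ) ^ (a - 1) * (δ * ((n + 1 : ℕ) : ℝ) ^ b)⁻¹ := by
          simp only [hg]; gcongr
      _ = _ := by rw [mul_inv]; ring
  have hlow : ∀ N : ℕ, ∑ n ∈ Finset.range N, g n ≤ (1 + 1 / a) * (N : ℝ) ^ a := by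
    intro N
    induction N with
    | zero => simp [Real.zero_rpow ha.ne']
    | succ N ih =>
      rw [Finset.sum_range_succ]
      have := aux_low a ha N
      have := hg1 N
      linarith
  set R : ℝ := δ ^ (-1 / b) with hR
  have hR1 : 1 ≤ R := Real.one_le_rpow_of_pos_of_le_one_of_nonpos hδ hδ1
    (by rw [neg_div]; have : 0 < 1 / b := by positivity
        linarith)
  have hR0 : 0 < R := by linarith
  have hRa : R ^ a = δ ^ (-a / b) := by
    rw [hR, ← Real.rpow_mul hδ.le]; congr 1; ring
  have hRb : R ^ b = δ⁻¹ := by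
    rw [hR, ← Real.rpow_mul hδ.le, ← Real.rpow_neg_one]; congr 1; field_simp
  set M : ℕ := ⌊R⌋₊ with hM
  have hM1 : 1 ≤ M := (Nat.one_le_floor_iff R).mpr hR1
  have hMR : (M : ℝ) ≤ R := Nat.floor_le hR0.le
  have hMR2 : R / 2 ≤ M := by
    have h1 := Nat.lt_floor_add_one R
    have h2 : (1 : ℝ) ≤ M := by exact_mod_cast hM1
    rw [← hM] at h1
    linarith
  have hhigh : ∀ N, M ≤ N → ∑ n ∈ Finset.range N, g n ≤
      (1 + 1 / a) * (M : ℝ) ^ a + δ⁻¹ / (b - a) * ((M : ℝ) ^ (-(b - a)) - (N : ℝ) ^ (-(b - a))) := by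
    intro N hN
    induction N, hN using Nat.le_induction with
    | base => simpa using hlow M
    | succ N hN ih =>
      rw [Finset.sum_range_succ]
      have h1 := aux_high (b - a) hc N (hM1.trans hN)
      have h2 := hg2 N
      have h3 : δ⁻¹ * ((N + 1 : ℕ) : ℝ) ^ (-(b - a) - 1) ≤
          δ⁻¹ / (b - a) * ((N : ℝ) ^ (-(b - a)) - ((N + 1 : ℕ) : ℝ) ^ (-(b - a))) := by
        rw [div_mul_eq_mul_div, le_div_iff₀ hc, mul_assoc]
        apply mul_le_mul_of_nonneg_left _ (by positivity)
        linarith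
      linarith
  have hall : ∑ n ∈ Finset.range N, g n ≤ ∑ n ∈ Finset.range (max M N), g n :=
    Finset.sum_le_sum_of_subset_of_nonneg (Finset.range_mono (le_max_right _ _)) (fun i _ _ => hg0 i)
  have h1 := hhigh (max M N) (le_max_left _ _)
  have h2 : (0 : ℝ) ≤ ((max M N : ℕ) : ℝ) ^ (-(b - a)) := by positivity
  have h3 : (M : ℝ) ^ a ≤ R ^ a := by gcongr
  have h4 : (M : ℝ) ^ (-(b - a)) ≤ (R / 2) ^ (-(b - a)) :=
    Real.rpow_le_rpow_of_nonpos (by positivity) hMR2 (by linarith)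
  have h5 : δ⁻¹ * (R / 2) ^ (-(b - a)) = 2 ^ (b - a) * R ^ a := by
    rw [← hRb, Real.div_rpow hR0.le (by norm_num), Real.rpow_neg (by norm_num : (0:ℝ) ≤ 2), div_inv_eq_mul,
      ← mul_assoc, ← Real.rpow_add hR0, mul_comm]
    ring_nf
  have h6 : δ⁻¹ / (b - a) * ((M : ℝ) ^ (-(b - a)) - ((max M N : ℕ) : ℝ) ^ (-(b - a))) ≤
      δ⁻¹ / (b - a) * (R / 2) ^ (-(b - a)) := by
    apply mul_le_mul_of_nonneg_left _ (by positivity)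
    linarith
  have h7 : δ⁻¹ / (b - a) * (R / 2) ^ (-(b - a)) = 2 ^ (b - a) / (b - a) * R ^ a := by
    rw [div_mul_eq_mul_div, h5]; ring
  have h8 : (1 + 1 / a) * (M : ℝ) ^ a ≤ (1 + 1 / a) * R ^ a := by gcongr
  rw [← hRa, add_mul]
  linarith

theorem knorm_bounds (k : Z2) : ∃ n : ℕ, max k.1.1.natAbs k.1.2.natAbs = n + 1 ∧
    ((n + 1 : ℕ) : ℝ) ≤ knorm k ∧ knorm k ≤ 2 * ((n + 1 : ℕ) : ℝ) := by
  obtain ⟨⟨x, y⟩, hk⟩ := k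
  have hpos : max x.natAbs y.natAbs ≠ 0 := by
    intro h
    apply hk
    have : x = 0 := by omega
    have : y = 0 := by omega
    simp [*]
  obtain ⟨n, hn⟩ := Nat.exists_eq_succ_of_ne_zero hpos
  refine ⟨n, hn, ?_⟩
  have ex : ((x.natAbs : ℕ) : ℝ) ^ 2 = (x : ℝ) ^ 2 := by
    rw [Nat.cast_natAbs]; simp
  have ey : ((y.natAbs : ℕ) : ℝ) ^ 2 = (y : ℝ) ^ 2 := by
    rw [Nat.cast_natAbs]; simp
  have hx : ((x.natAbs : ℕ) : ℝ) ≤ ((n + 1 : ℕ) : ℝ) := by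
    exact_mod_cast (show x.natAbs ≤ n + 1 by omega)
  have hy : ((y.natAbs : ℕ) : ℝ) ≤ ((n + 1 : ℕ) : ℝ) := by
    exact_mod_cast (show y.natAbs ≤ n + 1 by omega)
  have hx0 : (0 : ℝ) ≤ ((x.natAbs : ℕ) : ℝ) := by positivity
  have hy0 : (0 : ℝ) ≤ ((y.natAbs : ℕ) : ℝ) := by positivity
  simp only [knorm]
  rw [← ex, ← ey]
  constructor
  · apply Real.le_sqrt_of_sq_le
    rcases max_choice x.natAbs y.natAbs with h | h <;> rw [hn] at h
    · rw [← h]; simp only [Nat.succ_eq_add_one]; nlinarith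
    · rw [← h]; simp only [Nat.succ_eq_add_one]; nlinarith
  · apply Real.sqrt_le_iff.mpr
    constructor
    · positivity
    · nlinarith

theorem knorm_ge_one (k : Z2) : 1 ≤ knorm k := by
  obtain ⟨n, -, h, -⟩ := knorm_bounds k
  have : (1 : ℝ) ≤ ((n + 1 : ℕ) : ℝ) := by push_cast; linarith [Nat.cast_nonneg (α := ℝ) n]
  linarith

theorem aux_lattice (G : ℕ → ℝ) (hG : ∀ n, 0 ≤ G n) (s : Finset Z2) :
    ∃ N, ∑ k ∈ s, G (max k.1.1.natAbs k.1.2.natAbs) ≤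
      ∑ n ∈ Finset.range N, 8 * ((n + 1 : ℕ) : ℝ) * G (n + 1) := by
  classical
  set m : Z2 → ℕ := fun k => max k.1.1.natAbs k.1.2.natAbs - 1 with hm
  have hm' : ∀ k : Z2, max k.1.1.natAbs k.1.2.natAbs = m k + 1 := by
    intro k
    obtain ⟨n, h, -⟩ := knorm_bounds k
    simp only [hm]; omega
  refine ⟨s.sup m + 1, ?_⟩
  rw [← Finset.sum_fiberwise_of_maps_to (s := s) (t := Finset.range (s.sup m + 1)) (g := m)
    (fun k hk => by
      rw [Finset.mem_range]; exact Nat.lt_succ_of_le (Finset.le_sup hk))]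
  apply Finset.sum_le_sum
  intro n _
  have h1 : ∑ k ∈ s with m k = n, G (max k.1.1.natAbs k.1.2.natAbs) =
      ((s.filter fun k => m k = n).card : ℝ) * G (n + 1) := by
    rw [← nsmul_eq_mul, ← Finset.sum_const]
    apply Finset.sum_congr rfl
    intro k hk
    rw [hm', (Finset.mem_filter.mp hk).2]
  rw [h1]
  apply mul_le_mul_of_nonneg_right _ (hG _)
  have h2 : (s.filter fun k => m k = n).card ≤ (Finset.box (n + 1) : Finset (ℤ × ℤ)).card := by
    rw [← Finset.card_map (Function.Embedding.subtype _)]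
    apply Finset.card_le_card
    intro x hx
    obtain ⟨k, hk, rfl⟩ := Finset.mem_map.mp hx
    have := (Finset.mem_filter.mp hk).2
    rw [Int.mem_box]
    have h3 := hm' k
    rw [this] at h3
    exact h3
  rw [Int.card_box (by omega)] at h2
  exact_mod_cast h2

theorem main_bound (γ β : ℝ) (hγ : 0 < γ) (hβ : 0 < β) (h2β : 2 * β < γ) :
    ∃ C : ℝ, 0 < C ∧ ∀ δ ∈ Ioc (0 : ℝ) 1,
      (Summable fun k : Z2 => knorm k ^ (4 * β - 2) * (1 + δ * knorm k ^ (2 * γ))⁻¹) ∧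
      ∑' k : Z2, knorm k ^ (4 * β - 2) * (1 + δ * knorm k ^ (2 * γ))⁻¹
        ≤ C * δ ^ (-(2 * β) / γ) := by
  set K : ℝ := (1 + 1 / (4 * β)) + 2 ^ (2 * γ - 4 * β) / (2 * γ - 4 * β) with hK
  have hgb : 0 < 2 * γ - 4 * β := by linarith
  have hK0 : 0 < K := by positivity
  refine ⟨8 * 2 ^ (4 * β) * K, by positivity, ?_⟩
  rintro δ ⟨hδ, hδ1⟩
  have hf0 : ∀ k : Z2, 0 ≤ knorm k ^ (4 * β - 2) * (1 + δ * knorm k ^ (2 * γ))⁻¹ := by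
    intro k
    have := knorm_ge_one k
    positivity
  have hsum : ∀ s : Finset Z2, ∑ k ∈ s, knorm k ^ (4 * β - 2) * (1 + δ * knorm k ^ (2 * γ))⁻¹ ≤
      8 * 2 ^ (4 * β) * K * δ ^ (-(2 * β) / γ) := by
    intro s
    set G : ℕ → ℝ := fun n => 2 ^ (4 * β) * ((n : ℝ) ^ (4 * β - 2) * (1 + δ * (n : ℝ) ^ (2 * γ))⁻¹) with hG
    obtain ⟨N, hN⟩ := aux_lattice G (fun n => by positivity) s
    have h1 : ∀ k : Z2, knorm k ^ (4 * β - 2) * (1 + δ * knorm k ^ (2 * γ))⁻¹ ≤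
        G (max k.1.1.natAbs k.1.2.natAbs) := by
      intro k
      obtain ⟨n, hn, hl, hu⟩ := knorm_bounds k
      rw [hn]
      simp only [hG]
      have hx : (0 : ℝ) < ((n + 1 : ℕ) : ℝ) := by positivity
      have hk0 : 0 < knorm k := by linarith
      rw [← mul_assoc]
      have h2 : (1 + δ * knorm k ^ (2 * γ))⁻¹ ≤ (1 + δ * ((n + 1 : ℕ) : ℝ) ^ (2 * γ))⁻¹ := by
        apply inv_anti₀ (by positivity)
        gcongr
      apply mul_le_mul _ h2 (by positivity) (by positivity)
      rcases le_total (4 * β - 2) 0 with h | h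
      · have h3 := Real.rpow_le_rpow_of_nonpos hx hl h
        have h4 : (1 : ℝ) ≤ 2 ^ (4 * β) := Real.one_le_rpow (by norm_num) (by linarith)
        have h5 : 0 ≤ ((n + 1 : ℕ) : ℝ) ^ (4 * β - 2) := by positivity
        nlinarith
      · have h3 := Real.rpow_le_rpow hk0.le hu h
        rw [Real.mul_rpow (by norm_num) hx.le] at h3
        have h4 : (2 : ℝ) ^ (4 * β - 2) ≤ 2 ^ (4 * β) :=
          Real.rpow_le_rpow_of_exponent_le (by norm_num) (by linarith)
        have h5 : 0 ≤ ((n + 1 : ℕ) : ℝ) ^ (4 * β - 2) := by positivity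
        nlinarith
    have h2 := aux_sum (4 * β) (2 * γ) (by linarith) (by linarith) δ hδ hδ1 N
    rw [← hK] at h2
    have h3 : δ ^ (-(4 * β) / (2 * γ)) = δ ^ (-(2 * β) / γ) := by
      congr 1; field_simp; ring
    rw [h3] at h2
    calc _ ≤ ∑ k ∈ s, G (max k.1.1.natAbs k.1.2.natAbs) := Finset.sum_le_sum fun k _ => h1 k
      _ ≤ _ := hN
      _ = 8 * 2 ^ (4 * β) * ∑ n ∈ Finset.range N, ((n + 1 : ℕ) : ℝ) ^ (4 * β - 1) *
            (1 + δ * ((n + 1 : ℕ) : ℝ) ^ (2 * γ))⁻¹ := by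
          rw [Finset.mul_sum]
          apply Finset.sum_congr rfl
          intro n _
          have hx : (0 : ℝ) < ((n + 1 : ℕ) : ℝ) := by positivity
          have e : ((n + 1 : ℕ) : ℝ) ^ (4 * β - 1) = ((n + 1 : ℕ) : ℝ) ^ (4 * β - 2) * ((n + 1 : ℕ) : ℝ) := by
            rw [← Real.rpow_add_one hx.ne']; ring_nf
          rw [e]
          simp only [hG]
          ring
      _ ≤ 8 * 2 ^ (4 * β) * (K * δ ^ (-(2 * β) / γ)) :=
          mul_le_mul_of_nonneg_left h2 (by positivity)
      _ = _ := by ring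
  exact ⟨summable_of_sum_le hf0 hsum, Real.tsum_le_of_sum_le hf0 hsum⟩

/-- if `2β < γ` then `Σ_k |k|^{4β-2}(1+δ|k|^{2γ})^{-1} ≤ C δ^{-2β/γ}` for
`δ ∈ (0,1]`; in particular, with `β_η = ηγ/2` for `η ∈ (0,1/γ)`, the quantity
`Λ_{β_η}(δ) = Σ_k |k|^{-2(1-2β_η)}(1+δ|k|^{2γ})^{-1}` satisfies `Λ_{β_η}(δ) ≤ C δ^{-η}`. -/
theorem stmt8 (γ β : ℝ) (hγ : 0 < γ) (hβ : 0 < β) (h2β : 2 * β < γ) :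
    (∃ C : ℝ, 0 < C ∧ ∀ δ ∈ Ioc (0 : ℝ) 1,
      (Summable fun k : Z2 => knorm k ^ (4 * β - 2) * (1 + δ * knorm k ^ (2 * γ))⁻¹) ∧
      ∑' k : Z2, knorm k ^ (4 * β - 2) * (1 + δ * knorm k ^ (2 * γ))⁻¹
        ≤ C * δ ^ (-(2 * β) / γ)) ∧
    (∀ η : ℝ, 0 < η → η < 1 / γ →
      ∃ C : ℝ, 0 < C ∧ ∀ δ ∈ Ioc (0 : ℝ) 1,
        ∑' k : Z2, knorm k ^ (-(2 * (1 - 2 * (η * γ / 2)))) * (1 + δ * knorm k ^ (2 * γ))⁻¹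
          ≤ C * δ ^ (-η)) := by
  refine ⟨main_bound γ β hγ hβ h2β, ?_⟩
  intro η hη _
  rcases lt_or_ge η 1 with h1 | h1
  · obtain ⟨C, hC, h⟩ := main_bound γ (η * γ / 2) hγ (by positivity) (by nlinarith)
    refine ⟨C, hC, fun δ hδ => ?_⟩
    have h2 := (h δ hδ).2
    have e1 : 4 * (η * γ / 2) - 2 = -(2 * (1 - 2 * (η * γ / 2))) := by ring
    have e2 : -(2 * (η * γ / 2)) / γ = -η := by field_simp
    rw [e1, e2] at h2
    exact h2
  · -- Here the series diverges or is dominated by a single `δ`-independent series.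
    set p : ℝ := -(2 * (1 - 2 * (η * γ / 2))) with hp
    set S : Z2 → ℝ := fun k => knorm k ^ p * (knorm k ^ (2 * γ))⁻¹ with hS
    have hk1 := knorm_ge_one
    have hk0 : ∀ k, 0 < knorm k := fun k => by linarith [hk1 k]
    have hS0 : ∀ k, 0 ≤ S k := fun k => by have := hk0 k; positivity
    have hS1 : 0 ≤ ∑' k, S k := tsum_nonneg hS0
    refine ⟨(∑' k, S k) + 1, by linarith, ?_⟩
    rintro δ ⟨hδ, hδ1⟩
    have hδη : δ⁻¹ ≤ δ ^ (-η) := by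
      rw [← Real.rpow_neg_one]
      exact Real.rpow_le_rpow_of_exponent_ge hδ hδ1 (by linarith)
    have hδi : 0 < δ⁻¹ := by positivity
    by_cases hs : Summable fun k : Z2 => knorm k ^ p * (1 + δ * knorm k ^ (2 * γ))⁻¹
    · have hSs : Summable S := by
        refine Summable.of_nonneg_of_le hS0 (fun k => ?_) (hs.mul_left 2)
        have hk := hk0 k
        have h3 : 1 ≤ knorm k ^ (2 * γ) := Real.one_le_rpow (hk1 k) (by linarith)
        have h4 : (2 * knorm k ^ (2 * γ))⁻¹ ≤ (1 + δ * knorm k ^ (2 * γ))⁻¹ := by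
          apply inv_anti₀ (by positivity)
          nlinarith
        calc S k = 2 * (knorm k ^ p * (2 * knorm k ^ (2 * γ))⁻¹) := by
              simp only [hS]; rw [mul_inv]; ring
          _ ≤ _ := by gcongr
      have h5 : ∑' k : Z2, knorm k ^ p * (1 + δ * knorm k ^ (2 * γ))⁻¹ ≤ ∑' k, δ⁻¹ * S k := by
        refine hs.tsum_le_tsum (fun k => ?_) (hSs.mul_left _)
        have hk := hk0 k
        have h4 : (1 + δ * knorm k ^ (2 * γ))⁻¹ ≤ (δ * knorm k ^ (2 * γ))⁻¹ := by
          apply inv_anti₀ (by positivity)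
          linarith
        calc _ ≤ knorm k ^ p * (δ * knorm k ^ (2 * γ))⁻¹ := by gcongr
          _ = _ := by simp only [hS]; rw [mul_inv]; ring
      rw [tsum_mul_left] at h5
      nlinarith
    · rw [tsum_eq_zero_of_not_summable hs]
      positivity
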